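/- Let $\mathcal X$ be a standard Borel space (for example a separable, completely metrizable space with its Borel $\sigma$-algebra), and let $G$ be a group acting on $\mathcal X$ by measurable maps $x\mapsto gx$; extend the action componentwise to $\mathcal X^n$ and to sequences. Let $P$ and $Q$ be two probability laws of a process $X=(X_n)_{n\ge 1}$ with values in $\mathcal X$, and for $g\in G$ let $P_g$ and $Q_g$ be the laws, under $P$ and $Q$ respectively, of the process $(gX_n)_{n\ge 1}$. For each $n\ge 1$ let $m_n:\mathcal X^n\to\mathcal M_n$ be a maximal invariant with values in a standard Borel space $\mathcal M_n$, that is, a measurable map such that $m_n(gx)=m_n(x)$ for all $g\in G$, $x\in\mathcal X^n$, and such that $m_n(x)=m_n(y)$ implies $y=gx$ for some $g\in G$. Set $M_n:=m_n(X_1,\dots,X_n)$. By invariance, the distribution of $M_n$ is the same under every $P_g$ and the same under every $Q_g$; denote these distributions by $P^{M_n}$ and $Q^{M_n}$. Then: (i) for each $n\ge 2$, $M_{n-1}$ is a measurable function of $M_n$, that is, $M_{n-1}=f_n(M_n)$ for some measurable $f_n:\mathcal M_n\to\mathcal M_{n-1}$; (ii) if $Q^{M_n}\ll P^{M_n}$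 for every $n\ge 1$, then the process $$T^*_n:=\frac{dQ^{M_n}}{dP^{M_n}}(M_n),\qquad n\ge 1,$$ is, under every $P_g$, $g\in G$, a nonnegative martingale with respect to the filtration $\mathcal F_n:=\sigma(M_1,\dots,M_n)$, and $\int T^*_n\,dP_g=1$ for all $n\ge 1$. -/

import Mathlib

open MeasureTheory

/-- `m : 𝒳^ι → N` is a maximal invariant for the componentwise action of `G` on `𝒳^ι`:
it is measurable, constant on orbits, and takes different values on different orbits. -/
structure IsMaximalInvariant (G : Type*) [Group G] {𝒳 : Type*} [MeasurableSpace 𝒳] [MulAction G 𝒳]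
    {ι : Type*} {N : Type*} [MeasurableSpace N] (m : (ι → 𝒳) → N) : Prop where
  measurable : Measurable m
  invariant : ∀ (g : G) (x : ι → 𝒳), m (g • x) = m x
  maximal : ∀ x y : ι → 𝒳, m x = m y → ∃ g : G, y = g • x

/-- The law of the process obtained from a process with law `P` by applying `g` to every
component. -/
noncomputable def translatedLaw {G : Type*} [Group G] {𝒳 : Type*} [MeasurableSpace 𝒳]
    [MulAction G 𝒳] (P : Measure (ℕ → 𝒳)) (g : G) : Measure (ℕ → 𝒳) :=
  P.map fun ω => g • ω

/-- The statistic `m_k(X_1, …, X_k)` with `k = n + 1`, as a function of the whole trajectory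
`ω = (X_1, X_2, …) = (ω 0, ω 1, …)`. Sample sizes `k ≥ 1` are indexed by `n = k - 1`. -/
def invariantStat {𝒳 : Type*} {M : ℕ → Type*} (m : (n : ℕ) → (Fin (n + 1) → 𝒳) → M n) (n : ℕ)
    (ω : ℕ → 𝒳) : M n :=
  m n fun i => ω i

theorem measurable_invariantStat {𝒳 : Type*} [MeasurableSpace 𝒳] {M : ℕ → Type*}
    [∀ n, MeasurableSpace (M n)] {m : (n : ℕ) → (Fin (n + 1) → 𝒳) → M n}
    (hm : ∀ n, Measurable (m n)) (n : ℕ) : Measurable (invariantStat m n) :=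
  (hm n).comp (measurable_pi_lambda _ fun _ => measurable_pi_apply _)

/-- The filtration whose `n`-th σ-algebra is generated by the statistics of index `≤ n`. -/
def invariantFiltration {𝒳 : Type*} [MeasurableSpace 𝒳] {M : ℕ → Type*}
    [∀ n, MeasurableSpace (M n)] (m : (n : ℕ) → (Fin (n + 1) → 𝒳) → M n)
    (hm : ∀ n, Measurable (m n)) :
    Filtration ℕ (MeasurableSpace.pi : MeasurableSpace (ℕ → 𝒳)) where
  seq n := ⨆ i ≤ n, MeasurableSpace.comap (invariantStat m i) inferInstance
  mono' _ _ h := biSup_mono fun _ hi => le_trans hi h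
  le' _ := iSup₂_le fun i _ => (measurable_invariantStat hm i).comap_le

/-- The likelihood ratio `(dQ^{M_n}/dP^{M_n})(M_n)` of the statistic of index `n`. -/
noncomputable def invariantLikelihoodRatio {𝒳 : Type*} [MeasurableSpace 𝒳] {M : ℕ → Type*}
    [∀ n, MeasurableSpace (M n)] (m : (n : ℕ) → (Fin (n + 1) → 𝒳) → M n)
    (P Q : Measure (ℕ → 𝒳)) (n : ℕ) (ω : ℕ → 𝒳) : ℝ :=
  ((Q.map (invariantStat m n)).rnDeriv (P.map (invariantStat m n)) (invariantStat m n ω)).toReal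

/-- The distribution of a maximal invariant is the same under all translates of a law. -/
theorem map_invariantStat_translatedLaw {G : Type*} [Group G] {𝒳 : Type*} [MeasurableSpace 𝒳]
    [MulAction G 𝒳] [MeasurableConstSMul G 𝒳] {M : ℕ → Type*} [∀ n, MeasurableSpace (M n)]
    {m : (n : ℕ) → (Fin (n + 1) → 𝒳) → M n} (hm : ∀ n, IsMaximalInvariant G (m n))
    (P : Measure (ℕ → 𝒳)) (g : G) (n : ℕ) :
    (translatedLaw P g).map (invariantStat m n) = P.map (invariantStat m n) := by
  have hg : Measurable fun ω : ℕ → 𝒳 => g • ω :=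
    measurable_pi_lambda _ fun i => (measurable_pi_apply i).const_smul g
  rw [translatedLaw, Measure.map_map (measurable_invariantStat (fun k => (hm k).measurable) n) hg]
  congr 1
  funext ω
  exact (hm n).invariant g fun i => ω i

/-- A measurable map out of a standard Borel space that is constant on the fibres of a measurable
map `f` is measurable for the σ-algebra generated by `f`. -/
theorem Function.FactorsThrough.measurable_comap {X Y Z : Type*} [MeasurableSpace X]
    [StandardBorelSpace X] [mY : MeasurableSpace Y] [MeasurableSpace.CountablySeparated Y]
    [MeasurableSpace Z] {f : X → Y} {g : X → Z} (h : g.FactorsThrough f) (hf : Measurable f)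
    (hg : Measurable g) : Measurable[mY.comap f] g := by
  intro t ht
  have key : f ⁻¹' (f '' (g ⁻¹' t)) = g ⁻¹' t := by
    refine Set.Subset.antisymm ?_ (Set.subset_preimage_image f _)
    rintro x ⟨y, hy, hyx⟩
    rw [Set.mem_preimage, ← h hyx]
    exact hy
  have : MeasurableSpace.CountablySeparated (Set.range f) :=
    MeasurableSpace.Subtype.countablySeparated
  obtain ⟨u, hu, hus⟩ := hf.measurableSet_preimage_iff_preimage_val.1 (key.symm ▸ hg ht)
  refine ⟨u, hu, ?_⟩
  rw [← key]
  ext x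
  exact Set.ext_iff.1 hus ⟨f x, x, rfl⟩

section InvariantStat

variable {G : Type*} [Group G] {𝒳 : Type*} [MeasurableSpace 𝒳] [MulAction G 𝒳]
  {M : ℕ → Type*} [∀ n, MeasurableSpace (M n)] {m : (n : ℕ) → (Fin (n + 1) → 𝒳) → M n}

theorem factorsThrough_invariantStat_succ (hm : ∀ n, IsMaximalInvariant G (m n)) (n : ℕ) :
    (invariantStat m n).FactorsThrough (invariantStat m (n + 1)) := by
  intro ω ω' h
  obtain ⟨g, hg⟩ := (hm (n + 1)).maximal _ _ h
  have : (fun i : Fin (n + 1) => ω' i) = g • fun i : Fin (n + 1) => ω i :=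
    funext fun i => congrFun hg i.castSucc
  rw [invariantStat, invariantStat, this, (hm n).invariant]

theorem measurable_comap_invariantStat_succ [StandardBorelSpace 𝒳]
    [∀ n, StandardBorelSpace (M n)] (hm : ∀ n, IsMaximalInvariant G (m n)) (n : ℕ) :
    Measurable[MeasurableSpace.comap (invariantStat m (n + 1)) inferInstance]
      (invariantStat m n) :=
  (factorsThrough_invariantStat_succ hm n).measurable_comap
    (measurable_invariantStat (fun k => (hm k).measurable) _)
    (measurable_invariantStat (fun k => (hm k).measurable) _)

theorem monotone_comap_invariantStat [StandardBorelSpace 𝒳] [∀ n, StandardBorelSpace (M n)]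
    (hm : ∀ n, IsMaximalInvariant G (m n)) :
    Monotone fun n => MeasurableSpace.comap (invariantStat m n) inferInstance :=
  monotone_nat_of_le_succ fun n => (measurable_comap_invariantStat_succ hm n).comap_le

/-- The statistic of index `n` generates the whole history of the statistics up to `n`. -/
theorem invariantFiltration_eq_comap [StandardBorelSpace 𝒳] [∀ n, StandardBorelSpace (M n)]
    (hm : ∀ n, IsMaximalInvariant G (m n)) (n : ℕ) :
    invariantFiltration m (fun k => (hm k).measurable) n =
      MeasurableSpace.comap (invariantStat m n) inferInstance :=
  le_antisymm (iSup₂_le fun _ hi => monotone_comap_invariantStat hm hi)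
    (le_iSup₂_of_le n le_rfl le_rfl)

variable [MeasurableConstSMul G 𝒳]

instance isProbabilityMeasure_translatedLaw (P : Measure (ℕ → 𝒳)) [IsProbabilityMeasure P]
    (g : G) : IsProbabilityMeasure (translatedLaw P g) :=
  Measure.isProbabilityMeasure_map
    (measurable_pi_lambda _ fun i => (measurable_pi_apply i).const_smul g).aemeasurable

theorem integrable_invariantLikelihoodRatio (hm : ∀ n, IsMaximalInvariant G (m n))
    (P Q : Measure (ℕ → 𝒳)) [IsProbabilityMeasure P] [IsProbabilityMeasure Q] (g : G) (n : ℕ) :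
    Integrable (invariantLikelihoodRatio m P Q n) (translatedLaw P g) := by
  have hmeas := measurable_invariantStat (fun k => (hm k).measurable) n
  refine Integrable.comp_measurable (f := invariantStat m n)
    (g := fun y => ((Q.map (invariantStat m n)).rnDeriv (P.map (invariantStat m n)) y).toReal)
    ?_ hmeas
  rw [map_invariantStat_translatedLaw hm]
  exact Measure.integrable_toReal_rnDeriv

/-- The likelihood ratio of the statistic of index `n` integrates to the `Q`-probability over every
event determined by that statistic. -/
theorem setIntegral_invariantLikelihoodRatio (hm : ∀ n, IsMaximalInvariant G (m n))
    (P Q : Measure (ℕ → 𝒳)) [IsProbabilityMeasure P] [IsProbabilityMeasure Q] (g : G) {n : ℕ}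
    (hQP : Q.map (invariantStat m n) ≪ P.map (invariantStat m n)) {s : Set (ℕ → 𝒳)}
    (hs : MeasurableSet[MeasurableSpace.comap (invariantStat m n) inferInstance] s) :
    ∫ ω in s, invariantLikelihoodRatio m P Q n ω ∂(translatedLaw P g) = Q.real s := by
  have hmeas := measurable_invariantStat (fun k => (hm k).measurable) n
  have := Measure.isProbabilityMeasure_map (μ := P) hmeas.aemeasurable
  have := Measure.isProbabilityMeasure_map (μ := Q) hmeas.aemeasurable
  obtain ⟨t, ht, rfl⟩ := hs
  have h := setIntegral_map (μ := translatedLaw P g) (g := invariantStat m n)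
    (f := fun y => ((Q.map (invariantStat m n)).rnDeriv (P.map (invariantStat m n)) y).toReal)
    ht (Measure.measurable_rnDeriv _ _).ennreal_toReal.aestronglyMeasurable hmeas.aemeasurable
  rw [map_invariantStat_translatedLaw hm, Measure.setIntegral_toReal_rnDeriv hQP,
    map_measureReal_apply hmeas ht] at h
  exact h.symm

end InvariantStat

theorem maximal_invariant_likelihood_ratio_martingale
    {G : Type*} [Group G] {𝒳 : Type*} [MeasurableSpace 𝒳] [StandardBorelSpace 𝒳]
    [MulAction G 𝒳] [MeasurableConstSMul G 𝒳]
    (P Q : Measure (ℕ → 𝒳)) [IsProbabilityMeasure P] [IsProbabilityMeasure Q]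
    {M : ℕ → Type*} [∀ n, MeasurableSpace (M n)] [∀ n, StandardBorelSpace (M n)]
    (m : (n : ℕ) → (Fin (n + 1) → 𝒳) → M n)
    (hm : ∀ n, IsMaximalInvariant G (m n)) :
    (∀ n : ℕ, ∃ f : M (n + 1) → M n, Measurable f ∧
      ∀ ω : ℕ → 𝒳, invariantStat m n ω = f (invariantStat m (n + 1) ω)) ∧
    ((∀ n : ℕ, Q.map (invariantStat m n) ≪ P.map (invariantStat m n)) →
      ∀ g : G,
        Martingale (invariantLikelihoodRatio m P Q)
          (invariantFiltration m fun n => (hm n).measurable) (translatedLaw P g) ∧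
        (∀ (n : ℕ) (ω : ℕ → 𝒳), 0 ≤ invariantLikelihoodRatio m P Q n ω) ∧
        ∀ n : ℕ, ∫ ω, invariantLikelihoodRatio m P Q n ω ∂(translatedLaw P g) = 1) := by
  have hmeas := measurable_invariantStat fun k => (hm k).measurable
  refine ⟨fun n => ?_, fun hQP g => ⟨?_, fun _ _ => ENNReal.toReal_nonneg, fun n => ?_⟩⟩
  · obtain ⟨ω₀⟩ := P.nonempty_of_neZero
    have : Nonempty (M n) := ⟨invariantStat m n ω₀⟩
    obtain ⟨f, hf, hfe⟩ := (measurable_comap_invariantStat_succ hm n).exists_eq_measurable_comp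
    exact ⟨f, hf, congrFun hfe⟩
  · refine martingale_of_setIntegral_eq_succ (fun n => ?_)
      (integrable_invariantLikelihoodRatio hm P Q g) fun n s hs => ?_
    · rw [invariantFiltration_eq_comap hm]
      exact ((Measure.measurable_rnDeriv _ _).ennreal_toReal.comp
        (comap_measurable _)).stronglyMeasurable
    · rw [invariantFiltration_eq_comap hm] at hs
      rw [setIntegral_invariantLikelihoodRatio hm P Q g (hQP n) hs,
        setIntegral_invariantLikelihoodRatio hm P Q g (hQP (n + 1))
          (monotone_comap_invariantStat hm n.le_succ s hs)]
  · rw [← setIntegral_univ,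
      setIntegral_invariantLikelihoodRatio hm P Q g (hQP n) MeasurableSet.univ, probReal_univ]
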